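/- Context reduction for LBV: for every structure P and every context C{ } such that C{P} is provable in LBV, there exists a structure U such that (a) for every structure X there is a derivation in LBV with premise [U,X] and conclusion C{X}, and (b) [U,P] is provable in LBV. -/

import Mathlib

/-!
Context reduction follows by induction on the context from *splitting*: if `[(P,Q),K]` is
provable, then there are `K₁, K₂` with `[P,K₁]` and `[Q,K₂]` provable and a derivation from
`[K₁,K₂]` to `K`.  (For the induction the claim is generalised to `[C{P},K]`: a par in the context
is moved into `K`, and a copar is removed by splitting.)

Splitting is easy for a cut-free sequent calculus `Seq`, multiplicative linear logic with mix and a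
self-dual unit, by induction on sequent proofs (`Seq.split`).  What remains is that LBV-provability
implies cut-free provability.  This is shown semantically, in the style of Okada: structures are
interpreted by biorthogonally closed subsets (facts) of the phase space of finite multisets of
structures, whose pole is the set of cut-free provable sequents.  The rules of LBV are sound for
this interpretation (`interp_deriv`), whereas each `Γ` in the interpretation of `P` satisfies
`⊢ Γ, P` (`seq_of_mem_interp`); so no syntactic cut elimination is required.
-/

/-!
The deep-inference system LBV (the `BV`-free core system of the calculus of
structures of Guglielmi).  Structures are built from the unit `◦`, atoms `a`
and negated atoms `ā` by par `[P,Q]` and copar `(P,Q)`, and are identified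
modulo the congruence generated by associativity, commutativity and the
unit laws `[P,◦]=P`, `(P,◦)=P`.  The rules `ai↓`, `s` (and the atomic cut
`ai↑`) apply inside an arbitrary one-hole context and modulo the
equivalence.
-/

namespace LBV

/-- Structures: the unit `◦`, atoms, negated atoms, par `[P,Q]` and
copar `(P,Q)`. -/
inductive St : Type where
  | unit : St
  | pos  : ℕ → St
  | neg  : ℕ → St
  | par  : St → St → St
  | cop  : St → St → St
deriving DecidableEq

/-- Negation: `¬◦ = ◦`, `¬[P,Q] = (¬P,¬Q)`, `¬(P,Q) = [¬P,¬Q]`, `¬¬P = P`. -/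
def St.negS : St → St
  | .unit => .unit
  | .pos a => .neg a
  | .neg a => .pos a
  | .par P Q => .cop P.negS Q.negS
  | .cop P Q => .par P.negS Q.negS

/-- Atoms are the propositional symbols and their negations. -/
def St.isAtom : St → Prop
  | .pos _ => True
  | .neg _ => True
  | _ => False

/-- Syntactic equivalence of structures: the smallest congruence generated
by associativity and commutativity of par and copar and the unit laws
`[P,◦]=P` and `(P,◦)=P`. -/
inductive Equiv : St → St → Prop where
  | refl (P : St) : Equiv P P
  | symm {P Q : St} : Equiv P Q → Equiv Q P
  | trans {P Q R : St} : Equiv P Q → Equiv Q R → Equiv P R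
  | parComm (P Q : St) : Equiv (.par P Q) (.par Q P)
  | copComm (P Q : St) : Equiv (.cop P Q) (.cop Q P)
  | parAssoc (P Q R : St) : Equiv (.par (.par P Q) R) (.par P (.par Q R))
  | copAssoc (P Q R : St) : Equiv (.cop (.cop P Q) R) (.cop P (.cop Q R))
  | parUnit (P : St) : Equiv (.par P .unit) P
  | copUnit (P : St) : Equiv (.cop P .unit) P
  | parCongr {P P' Q Q' : St} :
      Equiv P P' → Equiv Q Q' → Equiv (.par P Q) (.par P' Q')
  | copCongr {P P' Q Q' : St} :
      Equiv P P' → Equiv Q Q' → Equiv (.cop P Q) (.cop P' Q')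

/-- One-hole contexts. -/
inductive Ctx : Type where
  | hole : Ctx
  | parL : Ctx → St → Ctx
  | parR : St → Ctx → Ctx
  | copL : Ctx → St → Ctx
  | copR : St → Ctx → Ctx

/-- Plugging a structure into the hole of a context. -/
def Ctx.fill : Ctx → St → St
  | .hole, P => P
  | .parL C Q, P => .par (C.fill P) Q
  | .parR Q C, P => .par Q (C.fill P)
  | .copL C Q, P => .cop (C.fill P) Q
  | .copR Q C, P => .cop Q (C.fill P)

/-- Names of the rules: interaction `ai↓`, co-interaction (atomic cut)
`ai↑`, and switch `s`. -/
inductive Rule : Type where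
  | aiDown | aiUp | s
deriving DecidableEq

/-- The rules read at the root of a structure (premise on the left,
conclusion on the right). -/
inductive RootStep : Rule → St → St → Prop where
  | aiDown (A : St) (h : A.isAtom) : RootStep .aiDown .unit (.par A A.negS)
  | aiUp (A : St) (h : A.isAtom) : RootStep .aiUp (.cop A A.negS) .unit
  | s (P Q R : St) : RootStep .s (.cop P (.par Q R)) (.par (.cop P Q) R)

/-- One inference step using a rule from the set `Rs`, applied inside an
arbitrary context and modulo the equivalence. -/
def Step (Rs : Set Rule) (P Q : St) : Prop :=
  ∃ r ∈ Rs, ∃ (C : Ctx) (P' Q' : St),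
    RootStep r P' Q' ∧ Equiv P (C.fill P') ∧ Equiv (C.fill Q') Q

/-- Derivations over an arbitrary step relation: a finite sequence of rule
instances from the premise to the conclusion (modulo the equivalence). -/
inductive Deriv (Stp : St → St → Prop) : St → St → Prop where
  | eqv {P Q : St} : Equiv P Q → Deriv Stp P Q
  | step {P Q R : St} : Stp P Q → Deriv Stp Q R → Deriv Stp P R

/-- The rules of the system LBV. -/
def LBVRules : Set Rule := {.aiDown, .s}

/-- Derivations in LBV. -/
def DerivLBV (P Q : St) : Prop := Deriv (Step LBVRules) P Q

/-- A proof of `Q` in LBV is a derivation from the unit `◦` to `Q`. -/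
def ProofLBV (Q : St) : Prop := DerivLBV .unit Q

end LBV

namespace LBV

open scoped Pointwise

/-! ### Structures modulo equivalence -/

instance stSetoid : Setoid St := ⟨Equiv, ⟨.refl, .symm, .trans⟩⟩

/-- Structures modulo equivalence, as a commutative monoid under par. -/
def QSt : Type := Quotient stSetoid

/-- The class of a structure. -/
def cls (P : St) : QSt := Quotient.mk stSetoid P

lemma cls_eq {P Q : St} : cls P = cls Q ↔ Equiv P Q :=
  ⟨fun h => Quotient.exact h, fun h => Quotient.sound h⟩

instance : Add QSt :=
  ⟨Quotient.map₂ St.par fun _ _ h _ _ h' => Equiv.parCongr h h'⟩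

instance : Zero QSt := ⟨cls .unit⟩

lemma cls_par (P Q : St) : cls (.par P Q) = cls P + cls Q := rfl

lemma cls_unit : cls .unit = 0 := rfl

lemma QSt.add_comm' (a b : QSt) : a + b = b + a := by
  induction a using Quotient.inductionOn
  induction b using Quotient.inductionOn
  exact Quotient.sound (.parComm _ _)

lemma QSt.add_zero' (a : QSt) : a + 0 = a := by
  induction a using Quotient.inductionOn
  exact Quotient.sound (.parUnit _)

instance : AddCommMonoid QSt where
  add_assoc a b c := by
    induction a using Quotient.inductionOn
    induction b using Quotient.inductionOn
    induction c using Quotient.inductionOn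
    exact Quotient.sound (.parAssoc _ _ _)
  add_comm := QSt.add_comm'
  add_zero := QSt.add_zero'
  zero_add a := by rw [QSt.add_comm', QSt.add_zero']
  nsmul := nsmulRec

/-- The par of a finite multiset of structures (a chosen representative of its class). -/
noncomputable def parM (Γ : Multiset St) : St := Quotient.out (Γ.map cls).sum

lemma cls_parM (Γ : Multiset St) : cls (parM Γ) = (Γ.map cls).sum := Quotient.out_eq _

/-! ### Derivations -/

namespace DerivLBV

lemma of_cls {P Q : St} (h : cls P = cls Q) : DerivLBV P Q := .eqv (cls_eq.1 h)

lemma trans {P Q R : St} (h : DerivLBV P Q) (h' : DerivLBV Q R) : DerivLBV P R := by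
  induction h with
  | eqv e =>
    cases h' with
    | eqv e' => exact .eqv (e.trans e')
    | step s d =>
      obtain ⟨r, hr, C, P', Q', hs, h1, h2⟩ := s
      exact .step ⟨r, hr, C, P', Q', hs, e.trans h1, h2⟩ d
  | step s _ ih => exact .step s (ih h')

lemma parLeft {P Q : St} (R : St) (h : DerivLBV P Q) : DerivLBV (.par P R) (.par Q R) := by
  induction h with
  | eqv e => exact .eqv (.parCongr e (.refl _))
  | step s _ ih =>
    obtain ⟨r, hr, C, P', Q', hs, h1, h2⟩ := s
    exact .step ⟨r, hr, .parL C R, P', Q', hs, .parCongr h1 (.refl _), .parCongr h2 (.refl _)⟩ ih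

lemma copLeft {P Q : St} (R : St) (h : DerivLBV P Q) : DerivLBV (.cop P R) (.cop Q R) := by
  induction h with
  | eqv e => exact .eqv (.copCongr e (.refl _))
  | step s _ ih =>
    obtain ⟨r, hr, C, P', Q', hs, h1, h2⟩ := s
    exact .step ⟨r, hr, .copL C R, P', Q', hs, .copCongr h1 (.refl _), .copCongr h2 (.refl _)⟩ ih

lemma parRight {P Q : St} (R : St) (h : DerivLBV P Q) : DerivLBV (.par R P) (.par R Q) :=
  .trans (.eqv (.parComm _ _)) (.trans (parLeft R h) (.eqv (.parComm _ _)))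

lemma copRight {P Q : St} (R : St) (h : DerivLBV P Q) : DerivLBV (.cop R P) (.cop R Q) :=
  .trans (.eqv (.copComm _ _)) (.trans (copLeft R h) (.eqv (.copComm _ _)))

lemma of_root {r : Rule} (hr : r ∈ LBVRules) {P Q : St} (h : RootStep r P Q) : DerivLBV P Q :=
  .step ⟨r, hr, .hole, P, Q, h, .refl _, .refl _⟩ (.eqv (.refl _))

lemma switch (P Q R : St) : DerivLBV (.cop P (.par Q R)) (.par (.cop P Q) R) :=
  of_root (by simp [LBVRules]) (.s P Q R)

lemma switch_switch (A B G H : St) :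
    DerivLBV (.cop (.par A G) (.par B H)) (.par (.cop A B) (.par G H)) := by
  refine .trans (switch _ _ _) ?_
  refine .trans (parLeft H (.trans (.eqv (.copComm _ _)) (switch B A G))) ?_
  refine .trans (.eqv (.parAssoc _ _ _)) (parLeft _ (.eqv (.copComm _ _)))

/-- A provable `[B,H]` can be brought next to `A` and then moved out of the copar by switch. -/
lemma absorb {B H : St} (h : ProofLBV (.par B H)) (A G : St) :
    DerivLBV (.par A G) (.par (.cop A B) (.par G H)) :=
  .trans (.eqv (Equiv.copUnit _).symm) (.trans (copRight _ h) (switch_switch _ _ _ _))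

end DerivLBV

lemma ProofLBV.mix {P Q : St} (hP : ProofLBV P) (hQ : ProofLBV Q) : ProofLBV (.par P Q) :=
  DerivLBV.trans hP (.trans (.eqv (Equiv.parUnit _).symm) (DerivLBV.parRight _ hQ))

/-! ### The cut-free sequent calculus -/

/-- Cut-free provability of one-sided sequents in multiplicative linear logic with mix (nullary and
binary) and a self-dual unit. -/
inductive Seq : Multiset St → Prop where
  | nil : Seq 0
  | ax (n : ℕ) : Seq {.pos n, .neg n}
  | unit {Γ : Multiset St} : Seq Γ → Seq (.unit ::ₘ Γ)
  | par {A B : St} {Γ : Multiset St} : Seq (A ::ₘ B ::ₘ Γ) → Seq (.par A B ::ₘ Γ)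
  | cop {A B : St} {Γ Δ : Multiset St} :
      Seq (A ::ₘ Γ) → Seq (B ::ₘ Δ) → Seq (.cop A B ::ₘ (Γ + Δ))
  | mix {Γ Δ : Multiset St} : Seq Γ → Seq Δ → Seq (Γ + Δ)

lemma Seq.sound {Γ : Multiset St} (h : Seq Γ) : ProofLBV (parM Γ) := by
  induction h with
  | nil => exact .of_cls (by simp [cls_parM, cls_unit])
  | ax n =>
    refine DerivLBV.trans (.of_root (by simp [LBVRules]) (.aiDown (.pos n) trivial)) ?_
    exact .of_cls (by simp [cls_parM, cls_par, St.negS])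
  | unit _ ih => exact ih.trans (.of_cls (by simp [cls_parM, cls_unit]))
  | par _ ih => exact ih.trans (.of_cls (by simp [cls_parM, cls_par, add_assoc]))
  | @cop A B Γ Δ _ _ ih ih' =>
    have h1 : ProofLBV (.par A (parM Γ)) := ih.trans (.of_cls (by simp [cls_parM, cls_par]))
    have h2 : ProofLBV (.par B (parM Δ)) := ih'.trans (.of_cls (by simp [cls_parM, cls_par]))
    exact h1.trans (.trans (.absorb h2 _ _) (.of_cls (by simp [cls_parM, cls_par])))
  | mix _ _ ih ih' =>
    exact (ih.mix ih').trans (.of_cls (by simp [cls_parM, cls_par]))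

/-- `K` splits into a part proving `P` and a part proving `Q`. -/
def Splits (P Q K : St) : Prop :=
  ∃ K₁ K₂, ProofLBV (.par P K₁) ∧ ProofLBV (.par Q K₂) ∧ DerivLBV (.par K₁ K₂) K

lemma Splits.mono {P Q K K' : St} (h : Splits P Q K) (d : DerivLBV K K') : Splits P Q K' := by
  obtain ⟨K₁, K₂, h1, h2, h3⟩ := h
  exact ⟨K₁, K₂, h1, h2, h3.trans d⟩

/-- Splitting for cut-free sequent proofs.  When the last rule does not act on `(P,Q)`, the
splitting of the premise containing `(P,Q)` is extended by a derivation. -/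
lemma Seq.split {Γ : Multiset St} (h : Seq Γ) (P Q : St) :
    ∀ Θ, Γ = .cop P Q ::ₘ Θ → Splits P Q (parM Θ) := by
  induction h with
  | nil => intro Θ e; simp at e
  | ax n =>
    intro Θ e
    have : St.cop P Q ∈ ({.pos n, .neg n} : Multiset St) := by rw [e]; simp
    simp at this
  | @unit Γ _ ih =>
    intro Θ e
    rcases Multiset.cons_eq_cons.1 e with ⟨e, _⟩ | ⟨_, Ξ, e1, e2⟩
    · cases e
    · subst e2
      exact (ih Ξ e1).mono (.of_cls (by simp [cls_parM, cls_unit]))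
  | @par A B Γ _ ih =>
    intro Θ e
    rcases Multiset.cons_eq_cons.1 e with ⟨e, _⟩ | ⟨_, Ξ, e1, e2⟩
    · cases e
    · subst e2
      refine (ih (A ::ₘ B ::ₘ Ξ) ?_).mono (.of_cls (by simp [cls_parM, cls_par, add_assoc]))
      rw [e1, Multiset.cons_swap B, Multiset.cons_swap A]
  | @cop A B Γ Δ hA hB ihA ihB =>
    intro Θ e
    have h1 : ProofLBV (.par A (parM Γ)) :=
      hA.sound.trans (.of_cls (by simp [cls_parM, cls_par]))
    have h2 : ProofLBV (.par B (parM Δ)) :=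
      hB.sound.trans (.of_cls (by simp [cls_parM, cls_par]))
    rcases Multiset.cons_eq_cons.1 e with ⟨e, e'⟩ | ⟨_, Ξ, e1, e2⟩
    · cases e
      subst e'
      exact ⟨parM Γ, parM Δ, h1, h2, .of_cls (by simp [cls_parM, cls_par])⟩
    · subst e2
      have hm : St.cop P Q ∈ Γ + Δ := by rw [e1]; simp
      rcases Multiset.mem_add.1 hm with hm | hm
      · obtain ⟨Γ', rfl⟩ := Multiset.exists_cons_of_mem hm
        obtain rfl : Γ' + Δ = Ξ := by simpa using e1
        refine (ihA (A ::ₘ Γ') (Multiset.cons_swap _ _ _)).mono ?_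
        refine .trans (.of_cls (Q := .par A (parM Γ')) (by simp [cls_parM, cls_par])) ?_
        exact .trans (.absorb h2 _ _) (.of_cls (by simp [cls_parM, cls_par]))
      · obtain ⟨Δ', rfl⟩ := Multiset.exists_cons_of_mem hm
        obtain rfl : Γ + Δ' = Ξ := by simpa using e1
        refine (ihB (B ::ₘ Δ') (Multiset.cons_swap _ _ _)).mono ?_
        refine .trans (.of_cls (Q := .par B (parM Δ')) (by simp [cls_parM, cls_par])) ?_
        refine .trans (.absorb h1 _ _) ?_
        refine .trans (DerivLBV.parLeft _ (.eqv (.copComm _ _))) ?_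
        exact .of_cls (by simp [cls_parM, cls_par, add_comm])
  | @mix Γ Δ hΓ hΔ ihΓ ihΔ =>
    intro Θ e
    have hm : St.cop P Q ∈ Γ + Δ := by rw [e]; simp
    rcases Multiset.mem_add.1 hm with hm | hm
    · obtain ⟨Γ', rfl⟩ := Multiset.exists_cons_of_mem hm
      obtain rfl : Γ' + Δ = Θ := by simpa using e
      refine (ihΓ Γ' rfl).mono (.trans (.eqv (Equiv.parUnit _).symm) ?_)
      exact .trans (DerivLBV.parRight _ hΔ.sound) (.of_cls (by simp [cls_parM, cls_par]))
    · obtain ⟨Δ', rfl⟩ := Multiset.exists_cons_of_mem hm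
      obtain rfl : Γ + Δ' = Θ := by simpa using e
      refine (ihΔ Δ' rfl).mono (.trans (.eqv (Equiv.parUnit _).symm) ?_)
      exact .trans (DerivLBV.parRight _ hΓ.sound)
        (.of_cls (by simp [cls_parM, cls_par, add_comm]))

/-! ### Phase semantics -/

/-- The orthogonal of a set of sequents, with respect to the pole `Seq`. -/
def orth (S : Set (Multiset St)) : Set (Multiset St) := {x | ∀ y ∈ S, Seq (x + y)}

lemma orth_anti {S T : Set (Multiset St)} (h : S ⊆ T) : orth T ⊆ orth S :=
  fun _ hx y hy => hx y (h hy)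

lemma subset_orth_orth (S : Set (Multiset St)) : S ⊆ orth (orth S) :=
  fun x hx y hy => by rw [add_comm]; exact hy x hx

lemma orth_orth_orth (S : Set (Multiset St)) : orth (orth (orth S)) = orth S :=
  (orth_anti (subset_orth_orth S)).antisymm (subset_orth_orth _)

lemma orth_orth_add (S T : Set (Multiset St)) : orth (orth (orth S) + T) = orth (S + T) := by
  refine (orth_anti (Set.add_subset_add_right (subset_orth_orth S))).antisymm ?_
  rintro x hx _ ⟨s, hs, t, ht, rfl⟩
  have : Seq (s + (x + t)) := by
    refine hs _ fun y hy => ?_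
    have := hx _ (Set.add_mem_add hy ht)
    rwa [add_comm y, ← add_assoc] at this
  simpa [add_left_comm] using this

lemma add_orth_orth (S T : Set (Multiset St)) : orth (S + orth (orth T)) = orth (S + T) := by
  rw [add_comm, orth_orth_add, add_comm]

/-- By mix, the pole is its own orthogonal, so the unit of the phase space is self-dual. -/
lemma orth_orth_zero : orth (orth {0}) = orth {0} := by
  refine Set.Subset.antisymm (fun x hx => ?_) (fun x hx y hy => ?_)
  · rintro _ rfl
    exact hx 0 (fun y hy => by cases hy; exact .nil)
  · have h1 : Seq x := by simpa using hx 0 rfl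
    have h2 : Seq y := by simpa using hy 0 rfl
    exact h1.mix h2

/-- The interpretation of structures by facts of the phase space.  A negated atom is interpreted by
the orthogonal of its atom, which makes `ai↓` sound by construction. -/
def interp : St → Set (Multiset St)
  | .unit => orth {0}
  | .pos n => orth {{.pos n}}
  | .neg n => orth (orth {{.pos n}})
  | .par P Q => orth (orth (interp P) + orth (interp Q))
  | .cop P Q => orth (orth (interp P + interp Q))

lemma interp_closed (P : St) : orth (orth (interp P)) = interp P := by
  cases P <;> exact orth_orth_orth _

lemma interp_equiv {P Q : St} (h : Equiv P Q) : interp P = interp Q := by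
  induction h with
  | refl P => rfl
  | symm _ ih => exact ih.symm
  | trans _ _ ih ih' => exact ih.trans ih'
  | parComm P Q => simp only [interp, add_comm]
  | copComm P Q => simp only [interp, add_comm]
  | parAssoc P Q R => simp only [interp, orth_orth_add, add_orth_orth, add_assoc]
  | copAssoc P Q R => simp only [interp, orth_orth_add, add_orth_orth, add_assoc]
  | parUnit P =>
    simp only [interp, add_orth_orth]
    rw [Set.singleton_zero, add_zero, interp_closed]
  | copUnit P =>
    simp only [interp]
    rw [← orth_orth_zero, add_orth_orth, Set.singleton_zero, add_zero, interp_closed]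
  | parCongr _ _ ih ih' => simp only [interp, ih, ih']
  | copCongr _ _ ih ih' => simp only [interp, ih, ih']

lemma interp_fill (C : Ctx) {P Q : St} (h : interp P ⊆ interp Q) :
    interp (C.fill P) ⊆ interp (C.fill Q) := by
  induction C with
  | hole => exact h
  | parL C R ih => exact orth_anti (Set.add_subset_add_right (orth_anti ih))
  | parR R C ih => exact orth_anti (Set.add_subset_add_left (orth_anti ih))
  | copL C R ih => exact orth_anti (orth_anti (Set.add_subset_add_right ih))
  | copR R C ih => exact orth_anti (orth_anti (Set.add_subset_add_left ih))

lemma interp_negS {A : St} (h : A.isAtom) : interp A.negS = orth (interp A) := by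
  cases A with
  | pos n => rfl
  | neg n => exact (orth_orth_orth _).symm
  | _ => exact h.elim

lemma interp_ai {A : St} (h : A.isAtom) : interp .unit ⊆ interp (.par A A.negS) := by
  rintro x hx _ ⟨u, hu, v, hv, rfl⟩
  rw [interp_negS h] at hv
  have h1 : Seq x := by simpa using hx 0 rfl
  have h2 : Seq (v + u) := hv u hu
  rw [add_comm] at h2
  exact h1.mix h2

lemma interp_switch (P Q R : St) :
    interp (.cop P (.par Q R)) ⊆ interp (.par (.cop P Q) R) := by
  rw [← interp_closed (.par (.cop P Q) R)]
  refine orth_anti (orth_anti ?_)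
  rintro _ ⟨a, ha, w, hw, rfl⟩ _ ⟨u, hu, c, hc, rfl⟩
  simp only [interp, orth_orth_orth] at hu
  have hq : a + u ∈ orth (interp Q) := fun b hb => by
    have := hu _ (Set.add_mem_add ha hb)
    rwa [← add_assoc, add_comm u] at this
  have := hw _ (Set.add_mem_add hq hc)
  simpa [add_assoc, add_left_comm] using this

lemma interp_deriv {P Q : St} (h : DerivLBV P Q) : interp P ⊆ interp Q := by
  induction h with
  | eqv e => exact (interp_equiv e).subset
  | step s _ ih =>
    obtain ⟨r, hr, C, P', Q', hs, h1, h2⟩ := s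
    refine Set.Subset.trans ?_ ih
    rw [interp_equiv h1, ← interp_equiv h2]
    apply interp_fill
    cases hs with
    | aiDown A h => exact interp_ai h
    | aiUp A h => simp [LBVRules] at hr
    | s P Q R => exact interp_switch P Q R

/-- Okada's lemma: membership in the interpretation of `P` implies cut-free provability
together with `P`. -/
lemma seq_of_mem_interp (P : St) : interp P ⊆ orth {{P}} := by
  induction P with
  | unit =>
    rintro x hx _ rfl
    have h1 : Seq x := by simpa using hx 0 rfl
    rw [add_comm, Multiset.singleton_add]
    exact h1.unit
  | pos n => exact subset_rfl
  | neg n =>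
    refine orth_anti ?_
    rintro _ rfl _ rfl
    rw [add_comm]
    exact .ax n
  | par P Q ihP ihQ =>
    rintro x hx _ rfl
    have hP : {P} ∈ orth (interp P) := orth_anti ihP (subset_orth_orth _ rfl)
    have hQ : {Q} ∈ orth (interp Q) := orth_anti ihQ (subset_orth_orth _ rfl)
    have := hx _ (Set.add_mem_add hP hQ)
    rw [add_comm, Multiset.singleton_add]
    refine .par ?_
    rwa [add_comm, add_assoc, Multiset.singleton_add, Multiset.singleton_add] at this
  | cop P Q ihP ihQ =>
    rw [← orth_orth_orth {{St.cop P Q}}]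
    refine orth_anti (orth_anti ?_)
    rintro _ ⟨x, hx, y, hy, rfl⟩ _ rfl
    have h1 := ihP hx _ rfl
    have h2 := ihQ hy _ rfl
    rw [add_comm, Multiset.singleton_add] at h1 h2 ⊢
    exact h1.cop h2

/-! ### Splitting and context reduction -/

lemma splitting {P Q K : St} (h : ProofLBV (.par (.cop P Q) K)) : Splits P Q K := by
  have h0 : (0 : Multiset St) ∈ interp .unit := by
    rintro _ rfl
    exact .nil
  -- The interpretation of the par gives the two-formula sequent at once, without inverting par.
  have hA : {St.cop P Q} ∈ orth (interp (.cop P Q)) :=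
    orth_anti (seq_of_mem_interp _) (subset_orth_orth _ rfl)
  have hK : {K} ∈ orth (interp K) := orth_anti (seq_of_mem_interp _) (subset_orth_orth _ rfl)
  have hs := interp_deriv h h0 _ (Set.add_mem_add hA hK)
  rw [zero_add] at hs
  exact (hs.split P Q {K} rfl).mono (.of_cls (by simp [cls_parM]))

/-- Context reduction with a side structure `K`, in the form suited to induction on the context. -/
lemma context_reduction_aux (P : St) (C : Ctx) : ∀ K, ProofLBV (.par (C.fill P) K) →
    ∃ U, (∀ X, DerivLBV (.par U X) (.par (C.fill X) K)) ∧ ProofLBV (.par U P) := by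
  induction C with
  | hole => exact fun K h => ⟨K, fun X => .eqv (.parComm _ _), h.trans (.eqv (.parComm _ _))⟩
  | parL C R ih =>
    intro K h
    obtain ⟨U, hU, hP⟩ := ih (.par R K) (h.trans (.eqv (.parAssoc _ _ _)))
    exact ⟨U, fun X => (hU X).trans (.eqv (Equiv.parAssoc _ _ _).symm), hP⟩
  | parR R C ih =>
    intro K h
    obtain ⟨U, hU, hP⟩ := ih (.par R K)
      (h.trans (.of_cls (by simp [Ctx.fill, cls_par, add_assoc, add_left_comm])))
    exact ⟨U, fun X => (hU X).trans
      (.of_cls (by simp [Ctx.fill, cls_par, add_assoc, add_left_comm])), hP⟩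
  | copL C R ih =>
    intro K h
    obtain ⟨K₁, K₂, h1, h2, h3⟩ := splitting h
    obtain ⟨U, hU, hP⟩ := ih K₁ h1
    exact ⟨U, fun X => (hU X).trans (.trans (.absorb h2 _ _) (DerivLBV.parRight _ h3)), hP⟩
  | copR R C ih =>
    intro K h
    obtain ⟨K₁, K₂, h1, h2, h3⟩ := splitting
      (h.trans (DerivLBV.parLeft K (.eqv (.copComm _ _))))
    obtain ⟨U, hU, hP⟩ := ih K₁ h1
    refine ⟨U, fun X => (hU X).trans (.trans (.absorb h2 _ _) ?_), hP⟩
    exact (DerivLBV.parRight _ h3).trans (DerivLBV.parLeft K (.eqv (.copComm _ _)))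

/-- Context reduction for LBV.
For every structure `P` and context `C{ }` such that `C{P}` is provable in
LBV, there is a structure `U` such that (a) for every structure `X` there is
a derivation in LBV from `[U,X]` to `C{X}`, and (b) `[U,P]` is provable in
LBV. -/
theorem context_reduction (P : St) (C : Ctx)
    (h : ProofLBV (C.fill P)) :
    ∃ U : St,
      (∀ X : St, DerivLBV (.par U X) (C.fill X)) ∧
      ProofLBV (.par U P) := by
  obtain ⟨U, hU, hP⟩ := context_reduction_aux P C .unit
    (DerivLBV.trans h (.eqv (Equiv.parUnit _).symm))
  exact ⟨U, fun X => (hU X).trans (.eqv (.parUnit _)), hP⟩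

end LBV
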